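/- There exists a constant C > 0, depending only on n, such that for every λ > 0 and every smooth ℤⁿ-periodic φ : ℝⁿ → ℝ with Δφ = −λ²φ and ∫_Q φ(x)² dx = 1, one has sup_{x ∈ ℝⁿ} ‖∇φ(x)‖ ≤ C λ^{(n+1)/2}. -/

import Mathlib

/-!
The Laplacian is diagonal in the Fourier basis of the torus, so an eigenfunction `φ` with
`Δφ = -λ²φ` only has frequencies `k ∈ ℤⁿ` on the sphere `2π|k| = λ`
(`integral_exp_mul_eq_zero`, from Green's identity). Hence `φ = ∑ c_k e^{2πi k·x}` is a finite sum,
and since each character has gradient of length `2π|k| = λ`, one gets `‖∇φ‖ ≤ λ ∑ |c_k|`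
(`norm_fderiv_le_of_trig_poly`).

By Cauchy-Schwarz and Parseval, `∑ |c_k| ≤ √N` with `N` the number of lattice points on the
sphere of radius `λ / 2π`. The elementary bound `N ≤ 2 (3λ)^(n-1)` (`lattice_count`) then gives
`‖∇φ‖ ≤ C λ · λ^((n-1)/2) = C λ^((n+1)/2)`.
-/

open MeasureTheory Real Set

noncomputable section

/-- The Euclidean Laplacian `Δφ = Σᵢ ∂²φ/∂xᵢ²`. -/
def lap {n : ℕ} (φ : EuclideanSpace ℝ (Fin n) → ℝ) (x : EuclideanSpace ℝ (Fin n)) : ℝ :=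
  ∑ i : Fin n,
    fderiv ℝ (fun y => fderiv ℝ φ y (EuclideanSpace.single i 1)) x (EuclideanSpace.single i 1)

/-- `ℤⁿ`-periodicity of a function on `ℝⁿ`. -/
def ZPeriodic {n : ℕ} (φ : EuclideanSpace ℝ (Fin n) → ℝ) : Prop :=
  ∀ (x : EuclideanSpace ℝ (Fin n)) (k : Fin n → ℤ),
    φ (x + (WithLp.equiv 2 (Fin n → ℝ)).symm fun i => (k i : ℝ)) = φ x

/-- The fundamental domain `Q = [0,1)ⁿ`. -/
def Qcube (n : ℕ) : Set (EuclideanSpace ℝ (Fin n)) :=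
  {x | ∀ i, x i ∈ Set.Ico (0 : ℝ) 1}

-- The Fourier theory of `UnitAddTorus` uses the Haar probability measure on `ℝ/ℤ` through this
-- instance, which is local to the Mathlib file that declares it.
attribute [local instance] instMeasureSpaceUnitAddCircle

/-- A continuous `ℤⁿ`-periodic function descends to a continuous function on the torus, because the
covering map `ℝⁿ → (ℝ/ℤ)ⁿ` is an open quotient map. -/
theorem exists_torus_lift {n : ℕ} {φ : EuclideanSpace ℝ (Fin n) → ℝ} (hc : Continuous φ)
    (hp : ZPeriodic φ) :
    ∃ F : C(UnitAddTorus (Fin n), ℂ), ∀ x : Fin n → ℝ,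
      F (fun i => (x i : UnitAddCircle)) = (φ (WithLp.toLp 2 x) : ℂ) := by
  have hq : IsOpenQuotientMap
      (Pi.map (fun (_ : Fin n) (t : ℝ) => (t : UnitAddCircle))) :=
    IsOpenQuotientMap.piMap fun _ => QuotientAddGroup.isOpenQuotientMap_mk
  let p : C(Fin n → ℝ, UnitAddTorus (Fin n)) := ⟨_, hq.continuous⟩
  have hp' : Topology.IsQuotientMap p := hq.isQuotientMap
  let g : C(Fin n → ℝ, ℂ) := ⟨fun x => (φ (WithLp.toLp 2 x) : ℂ), by fun_prop⟩
  have hfac : Function.FactorsThrough g p := by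
    intro x y hxy
    have h1 : ∀ i, ∃ k : ℤ, x i = y i + k := by
      intro i
      have h2 : ((x i : ℝ) : UnitAddCircle) = (y i : ℝ) := congrFun hxy i
      rw [← sub_eq_zero, ← AddCircle.coe_sub, AddCircle.coe_eq_zero_iff] at h2
      obtain ⟨k, hk⟩ := h2
      exact ⟨k, by rw [zsmul_one] at hk; linarith⟩
    choose k hk using h1
    have : WithLp.toLp 2 x = WithLp.toLp 2 y +
        (WithLp.equiv 2 (Fin n → ℝ)).symm (fun i => (k i : ℝ)) := by
      ext i; simp [hk]
    simp only [g, ContinuousMap.coe_mk, this, hp _ k]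
  exact ⟨hp'.lift g hfac, fun x => congrFun (congrArg DFunLike.coe (hp'.lift_comp g hfac)) x⟩

theorem mFourier_coe {n : ℕ} (k : Fin n → ℤ) (x : Fin n → ℝ) :
    UnitAddTorus.mFourier k (fun i => (x i : UnitAddCircle)) =
      Complex.exp (∑ i, (2 * π * Complex.I * k i) * x i) := by
  simp only [UnitAddTorus.mFourier, ContinuousMap.coe_mk, fourier_coe_apply, Complex.exp_sum]
  simp

theorem hasFDerivAt_toLp_ofReal {n : ℕ} {f : EuclideanSpace ℝ (Fin n) → ℝ}
    (hf : Differentiable ℝ f) (x : Fin n → ℝ) :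
    HasFDerivAt (fun x : Fin n → ℝ => (f (WithLp.toLp 2 x) : ℂ))
      (Complex.ofRealCLM.comp ((fderiv ℝ f (WithLp.toLp 2 x)).comp
        (PiLp.continuousLinearEquiv 2 ℝ (fun _ : Fin n => ℝ)).symm.toContinuousLinearMap)) x :=
  Complex.ofRealCLM.hasFDerivAt.comp x ((hf _).hasFDerivAt.comp x
    (PiLp.continuousLinearEquiv 2 ℝ (fun _ : Fin n => ℝ)).symm.hasFDerivAt)

theorem hasFDerivAt_exp_linear {n : ℕ} (a : Fin n → ℂ) (x : Fin n → ℝ) :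
    HasFDerivAt (fun x : Fin n → ℝ => Complex.exp (∑ i, a i * x i))
      (Complex.exp (∑ i, a i * x i) • ∑ i, a i •
        Complex.ofRealCLM.comp (ContinuousLinearMap.proj (R := ℝ) (φ := fun _ : Fin n => ℝ) i)) x := by
  refine HasFDerivAt.cexp ?_
  refine HasFDerivAt.fun_sum fun i _ => ?_
  exact ((Complex.ofRealCLM.comp (ContinuousLinearMap.proj (R := ℝ) (φ := fun _ : Fin n => ℝ) i)).hasFDerivAt).const_mul (a i)

theorem ZPeriodic.fderiv_apply {n : ℕ} {φ : EuclideanSpace ℝ (Fin n) → ℝ} (hp : ZPeriodic φ)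
    (v : EuclideanSpace ℝ (Fin n)) : ZPeriodic (fun y => fderiv ℝ φ y v) := by
  intro x k
  have h : (fun y => φ (y + (WithLp.equiv 2 (Fin n → ℝ)).symm fun i => (k i : ℝ))) = φ :=
    funext fun y => hp y k
  have := fderiv_comp_add_right (𝕜 := ℝ) (f := φ) (x := x)
    ((WithLp.equiv 2 (Fin n → ℝ)).symm fun i => (k i : ℝ))
  rw [h] at this
  simp only [this]

/-- A sphere of radius `r` in `ℝ^(m+1)` carries at most `2 (3r)^m` lattice points: the last `m`
coordinates lie in `[-r, r]` and determine the first one up to sign. A positive `r` with at least one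
lattice point satisfies `r ≥ 1`, so an interval `[-r, r]` contains at most `2r + 1 ≤ 3r` integers. -/
theorem lattice_count (m : ℕ) (r : ℝ) (S : Finset (Fin (m + 1) → ℤ)) (hr : 0 < r)
    (hS : ∀ k ∈ S, ∑ i, (k i : ℝ) ^ 2 = r ^ 2) : (S.card : ℝ) ≤ 2 * (3 * r) ^ m := by
  classical
  rcases S.eq_empty_or_nonempty with rfl | ⟨k₀, hk₀⟩
  · simp; positivity
  have hr1 : 1 ≤ r := by
    by_contra! h
    have h1 : ((∑ i, (k₀ i) ^ 2 : ℤ) : ℝ) < 1 := by push_cast; rw [hS _ hk₀]; nlinarith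
    have h2 : 0 < ((∑ i, (k₀ i) ^ 2 : ℤ) : ℝ) := by push_cast; rw [hS _ hk₀]; positivity
    norm_cast at h1 h2
    omega
  have hle : ∀ k ∈ S, ∀ i, |k i| ≤ ⌊r⌋ := by
    intro k hk i
    rw [Int.le_floor]
    push_cast
    refine abs_le_of_sq_le_sq ?_ hr.le
    rw [← hS k hk]
    exact Finset.single_le_sum (f := fun i => (k i : ℝ) ^ 2) (fun _ _ => sq_nonneg _) (Finset.mem_univ i)
  let T : Finset ((Fin m → ℤ) × Bool) :=
    (Fintype.piFinset fun _ => Finset.Icc (-⌊r⌋) ⌊r⌋) ×ˢ Finset.univ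
  have hcard : S.card ≤ T.card := by
    refine Finset.card_le_card_of_injOn (fun k => (fun i => k i.succ, decide (0 ≤ k 0))) ?_ ?_
    · intro k hk
      simp only [T, Finset.coe_product, Set.mem_prod, Finset.mem_coe, Fintype.mem_piFinset,
        Finset.mem_Icc, Finset.mem_univ, and_true]
      exact fun i => abs_le.1 (hle k hk _)
    · intro k hk l hl hkl
      simp only [Prod.mk.injEq, decide_eq_decide] at hkl
      obtain ⟨h1, h2⟩ := hkl
      have e1 := hS k hk
      have e2 := hS l hl
      rw [Fin.sum_univ_succ] at e1 e2
      have h3 : ∀ i, k (Fin.succ i) = l (Fin.succ i) := fun i => congrFun h1 i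
      simp only [h3] at e1
      have h4 : (k 0 : ℝ) ^ 2 = (l 0 : ℝ) ^ 2 := by linarith
      have h5 : k 0 ^ 2 = l 0 ^ 2 := by exact_mod_cast h4
      have h6 : k 0 = l 0 := by
        rcases sq_eq_sq_iff_eq_or_eq_neg.1 h5 with h | h
        · exact h
        · omega
      funext i
      exact Fin.cases h6 h3 i
  have hT : T.card = (2 * ⌊r⌋ + 1).toNat ^ m * 2 := by
    simp [T, Finset.card_product, Fintype.card_piFinset]
    congr 2; ring
  have h0 : (0 : ℤ) ≤ ⌊r⌋ := Int.floor_nonneg.2 hr.le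
  have h7 : (((2 * ⌊r⌋ + 1).toNat : ℕ) : ℝ) ≤ 3 * r := by
    have : (((2 * ⌊r⌋ + 1).toNat : ℕ) : ℤ) = 2 * ⌊r⌋ + 1 := Int.toNat_of_nonneg (by omega)
    have h8 : (((2 * ⌊r⌋ + 1).toNat : ℕ) : ℝ) = 2 * ⌊r⌋ + 1 := by exact_mod_cast this
    rw [h8]
    linarith [Int.floor_le r]
  calc (S.card : ℝ) ≤ T.card := by exact_mod_cast hcard
    _ = (((2 * ⌊r⌋ + 1).toNat : ℕ) : ℝ) ^ m * 2 := by rw [hT]; push_cast; rfl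
    _ ≤ (3 * r) ^ m * 2 := by gcongr
    _ = _ := by ring

/-- Green's identity: an eigenfunction with eigenvalue `λ²` is orthogonal to every character whose
eigenvalue `4π²|k|²` differs from `λ²`. The periodic field `e ∇φ - φ ∇e` has divergence
`(4π²|k|² - λ²) e φ`, and its fluxes through opposite faces of the unit cube cancel. -/
theorem integral_exp_mul_eq_zero {m : ℕ} {φ : EuclideanSpace ℝ (Fin (m + 1)) → ℝ} {lam : ℝ}
    (hφ : ContDiff ℝ (⊤ : ℕ∞) φ) (hp : ZPeriodic φ) (hlap : ∀ x, lap φ x = -lam ^ 2 * φ x)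
    (k : Fin (m + 1) → ℤ) (hk : (2 * π) ^ 2 * ∑ i, (k i : ℝ) ^ 2 ≠ lam ^ 2) :
    ∫ x in Icc (0 : Fin (m + 1) → ℝ) 1,
      Complex.exp (∑ i, (2 * π * Complex.I * k i) * x i) * φ (WithLp.toLp 2 x) = 0 := by
  set a : Fin (m + 1) → ℂ := fun i => 2 * π * Complex.I * k i with ha
  let D : Fin (m + 1) → EuclideanSpace ℝ (Fin (m + 1)) → ℝ :=
    fun i y => fderiv ℝ φ y (EuclideanSpace.single i 1)
  have hφd : Differentiable ℝ φ := hφ.differentiable (by simp)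
  have hD : ∀ i, ContDiff ℝ (⊤ : ℕ∞) (D i) := fun i =>
    (hφ.fderiv_right (m := (⊤ : ℕ∞)) (by simp)).clm_apply contDiff_const
  have hDd : ∀ i, Differentiable ℝ (D i) := fun i => (hD i).differentiable (by simp)
  have hDc : ∀ i, Continuous (D i) := fun i => (hD i).continuous
  have hφc : Continuous φ := hφ.continuous
  let e : (Fin (m + 1) → ℝ) → ℂ := fun x => Complex.exp (∑ i, a i * x i)
  have hec : Continuous e := by fun_prop
  let G : Fin (m + 1) → (Fin (m + 1) → ℝ) → ℂ := fun i x =>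
    e x * (D i (WithLp.toLp 2 x) : ℂ) - a i * (e x * (φ (WithLp.toLp 2 x) : ℂ))
  have hsingle : ∀ i : Fin (m + 1), (PiLp.continuousLinearEquiv 2 ℝ
      (fun _ : Fin (m + 1) => ℝ)).symm (Pi.single i 1) = EuclideanSpace.single i 1 := by
    intro i; rfl
  -- The mixed first-order terms of the product rule cancel.
  have hG : ∀ i x, ∃ L : (Fin (m + 1) → ℝ) →L[ℝ] ℂ, HasFDerivAt (G i) L x ∧
      L (Pi.single i 1) = e x * (fderiv ℝ (D i) (WithLp.toLp 2 x) (EuclideanSpace.single i 1) : ℝ)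
        - a i ^ 2 * (e x * (φ (WithLp.toLp 2 x) : ℂ)) := by
    intro i x
    refine ⟨_, ((hasFDerivAt_exp_linear a x).mul (hasFDerivAt_toLp_ofReal (hDd i) x)).sub
      (((hasFDerivAt_exp_linear a x).mul (hasFDerivAt_toLp_ofReal hφd x)).const_mul (a i)), ?_⟩
    have hsum : (∑ j, a j • Complex.ofRealCLM.comp
        (ContinuousLinearMap.proj (R := ℝ) (φ := fun _ : Fin (m + 1) => ℝ) j)) (Pi.single i 1)
          = a i := by
      simp only [sum_apply, smul_apply, ContinuousLinearMap.comp_apply, Complex.ofRealCLM_apply,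
        ContinuousLinearMap.proj_apply, smul_eq_mul]
      rw [Finset.sum_eq_single i (fun j _ hj => by simp [hj]) (by simp)]
      simp
    simp only [sub_apply, add_apply,
      smul_apply, hsum, ContinuousLinearMap.comp_apply,
      ContinuousLinearEquiv.coe_coe, hsingle, Complex.ofRealCLM_apply, smul_eq_mul, e, D]
    ring
  choose G' hG' hG'1 using hG
  have hGper : ∀ i (x : Fin m → ℝ), G i (i.insertNth 1 x) = G i (i.insertNth 0 x) := by
    intro i x
    have h1 : (i.insertNth (1 : ℝ) x : Fin (m + 1) → ℝ) = i.insertNth (0 : ℝ) x +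
        fun j => (((Pi.single i 1 : Fin (m + 1) → ℤ) j : ℤ) : ℝ) := by
      funext j
      rcases Fin.eq_self_or_eq_succAbove i j with rfl | ⟨j, rfl⟩
      · simp
      · simp [Fin.succAbove_ne]
    have h2 : e (i.insertNth 1 x) = e (i.insertNth 0 x) := by
      simp only [e, ha, ← mFourier_coe]
      congr 1
      funext j
      rw [h1]
      simp only [Pi.add_apply]
      rw [AddCircle.coe_add, add_eq_left, AddCircle.coe_eq_zero_iff]
      exact ⟨_, zsmul_one _⟩
    have h3 : ∀ f : EuclideanSpace ℝ (Fin (m + 1)) → ℝ, ZPeriodic f →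
        f (WithLp.toLp 2 (i.insertNth 1 x)) = f (WithLp.toLp 2 (i.insertNth 0 x)) := by
      intro f hf
      rw [h1]
      exact hf (WithLp.toLp 2 (i.insertNth 0 x)) _
    simp only [G, h2, h3 _ hp, h3 (D i) (hp.fderiv_apply _)]
  have hc : ((2 * π) ^ 2 * ∑ i, (k i : ℝ) ^ 2 - lam ^ 2 : ℝ) ≠ 0 := sub_ne_zero.2 hk
  have hpt : ∀ x : Fin (m + 1) → ℝ, ∑ i, G' i x (Pi.single i 1) =
      (((2 * π) ^ 2 * ∑ i, (k i : ℝ) ^ 2 - lam ^ 2 : ℝ) : ℂ) * (e x * φ (WithLp.toLp 2 x)) := by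
    intro x
    have h1 : ∑ i, ((fderiv ℝ (D i) (WithLp.toLp 2 x) (EuclideanSpace.single i 1) : ℝ) : ℂ)
        = -lam ^ 2 * φ (WithLp.toLp 2 x) := by
      exact_mod_cast congrArg Complex.ofReal (hlap (WithLp.toLp 2 x))
    have h2 : ∑ i, a i ^ 2 = -((2 * π) ^ 2 * ∑ i, (k i : ℂ) ^ 2) := by
      simp only [ha, Finset.mul_sum, ← Finset.sum_neg_distrib]
      refine Finset.sum_congr rfl fun i _ => ?_
      linear_combination (2 * π * k i : ℂ) ^ 2 * Complex.I_sq
    simp only [hG'1, Finset.sum_sub_distrib, ← Finset.mul_sum, ← Finset.sum_mul, h1, h2]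
    push_cast
    ring
  have hdiv := integral_divergence_of_hasFDerivAt_off_countable' (0 : Fin (m + 1) → ℝ) 1
    zero_le_one G G' ∅ countable_empty (fun i => by fun_prop) (fun x _ i => hG' i x)
  simp only [hpt, Pi.one_apply, Pi.zero_apply, hGper, sub_self, Finset.sum_const_zero] at hdiv
  have h0 := hdiv (Continuous.integrableOn_Icc (by fun_prop))
  rw [integral_const_mul] at h0
  exact (mul_eq_zero.1 h0).resolve_left (by exact_mod_cast hc)

/-- The half-open cube used for integration on `UnitAddTorus` and the closed cube of the divergence
theorem differ by a null set. -/
theorem Ioc_cube_ae_eq (n : ℕ) :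
    {x : Fin n → ℝ | ∀ i, x i ∈ Ioc ((0 : Fin n → ℝ) i) ((0 : Fin n → ℝ) i + 1)} =ᵐ[volume]
      Icc (0 : Fin n → ℝ) 1 := by
  have := Measure.univ_pi_Ioc_ae_eq_Icc (μ := fun _ : Fin n => (volume : Measure ℝ))
    (f := 0) (g := 1)
  rw [volume_pi]
  convert this using 2
  simp [Set.pi]

theorem integral_Qcube (n : ℕ) (f : EuclideanSpace ℝ (Fin n) → ℝ) :
    ∫ x in Qcube n, f x = ∫ x in Icc (0 : Fin n → ℝ) 1, f (WithLp.toLp 2 x) := by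
  have h1 := (PiLp.volume_preserving_toLp (Fin n)).setIntegral_preimage_emb
    (MeasurableEquiv.toLp 2 (Fin n → ℝ)).measurableEmbedding f (Qcube n)
  rw [← h1]
  have := Measure.univ_pi_Ico_ae_eq_Icc (μ := fun _ : Fin n => (volume : Measure ℝ))
    (f := 0) (g := 1)
  rw [← volume_pi] at this
  rw [← setIntegral_congr_set this]
  congr 2
  ext x
  simp [Qcube]

/-- Parseval's identity for the torus lift of an `L²`-normalized function. -/
theorem parseval {n : ℕ} {φ : EuclideanSpace ℝ (Fin n) → ℝ} (F : C(UnitAddTorus (Fin n), ℂ))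
    (hF : ∀ x : Fin n → ℝ, F (fun i => (x i : UnitAddCircle)) = (φ (WithLp.toLp 2 x) : ℂ))
    (hnorm : (∫ x in Qcube n, (φ x) ^ 2) = 1) :
    HasSum (fun k => ‖UnitAddTorus.mFourierCoeff F k‖ ^ 2) 1 := by
  have : IsProbabilityMeasure (volume : Measure UnitAddCircle) :=
    inferInstanceAs (IsProbabilityMeasure AddCircle.haarAddCircle)
  have h := UnitAddTorus.hasSum_sq_mFourierCoeff (F.toLp (E := ℂ) 2 volume ℂ)
  simp only [UnitAddTorus.mFourierCoeff_toLp] at h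
  convert h using 1
  have h1 : ∫ t, ‖(F.toLp (E := ℂ) 2 volume ℂ) t‖ ^ 2 = ∫ t, ‖F t‖ ^ 2 := by
    refine integral_congr_ae ?_
    filter_upwards [F.coeFn_toLp (p := 2) (𝕜 := ℂ) volume] with t ht
    rw [ht]
  rw [h1, UnitAddTorus.integral_preimage _ 0, setIntegral_congr_set (Ioc_cube_ae_eq n)]
  rw [integral_Qcube] at hnorm
  simpa [hF] using hnorm.symm

theorem mFourierCoeff_eq_zero {m : ℕ} {φ : EuclideanSpace ℝ (Fin (m + 1)) → ℝ} {lam : ℝ}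
    (hφ : ContDiff ℝ (⊤ : ℕ∞) φ) (hp : ZPeriodic φ) (hlap : ∀ x, lap φ x = -lam ^ 2 * φ x)
    (F : C(UnitAddTorus (Fin (m + 1)), ℂ))
    (hF : ∀ x : Fin (m + 1) → ℝ,
      F (fun i => (x i : UnitAddCircle)) = (φ (WithLp.toLp 2 x) : ℂ))
    (k : Fin (m + 1) → ℤ) (hk : (2 * π) ^ 2 * ∑ i, (k i : ℝ) ^ 2 ≠ lam ^ 2) :
    UnitAddTorus.mFourierCoeff F k = 0 := by
  rw [UnitAddTorus.mFourierCoeff_eq_integral _ _ 0, setIntegral_congr_set (Ioc_cube_ae_eq _)]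
  simp only [hF, mFourier_coe, smul_eq_mul]
  exact integral_exp_mul_eq_zero hφ hp hlap (-k) (by simpa using hk)

/-- If all frequencies of a trigonometric polynomial lie on the sphere `2π|k| = λ`, then its gradient
is bounded by `λ` times the `ℓ¹` norm of its coefficients. -/
theorem norm_fderiv_le_of_trig_poly {n : ℕ} {φ : EuclideanSpace ℝ (Fin n) → ℝ} {lam : ℝ}
    (hlam : 0 < lam) (hφ : Differentiable ℝ φ) (S : Finset (Fin n → ℤ)) (c : (Fin n → ℤ) → ℂ)
    (hS : ∀ k ∈ S, (2 * π) ^ 2 * ∑ i, (k i : ℝ) ^ 2 = lam ^ 2)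
    (hsum : ∀ x : Fin n → ℝ, (φ (WithLp.toLp 2 x) : ℂ) =
      ∑ k ∈ S, c k * Complex.exp (∑ i, (2 * π * Complex.I * k i) * x i))
    (x : EuclideanSpace ℝ (Fin n)) : ‖fderiv ℝ φ x‖ ≤ lam * ∑ k ∈ S, ‖c k‖ := by
  refine ContinuousLinearMap.opNorm_le_bound _ (by positivity) fun v => ?_
  have h1 := hasFDerivAt_toLp_ofReal hφ x.ofLp
  have h2 := HasFDerivAt.fun_sum (u := S) fun k _ =>
    (hasFDerivAt_exp_linear (fun i => 2 * π * Complex.I * k i) x.ofLp).const_mul (c k)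
  rw [← funext hsum] at h2
  have h3 := DFunLike.congr_fun (h1.unique h2) v.ofLp
  have h4 : ((fderiv ℝ φ x v : ℝ) : ℂ) = ∑ k ∈ S, c k *
      (Complex.exp (∑ i, (2 * π * Complex.I * k i) * x i) *
        ∑ i, (2 * π * Complex.I * k i) * v i) := by
    simpa [sum_apply] using h3
  rw [← Complex.norm_real, h4,
    show lam * (∑ k ∈ S, ‖c k‖) * ‖v‖ = ∑ k ∈ S, ‖c k‖ * (lam * ‖v‖) by
      rw [← Finset.sum_mul]; ring]
  refine (norm_sum_le _ _).trans (Finset.sum_le_sum fun k hk => ?_)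
  have h5 : (∑ i, (2 * π * Complex.I * k i) * x i : ℂ) =
      ((2 * π * ∑ i, k i * x i : ℝ) : ℂ) * Complex.I := by
    push_cast
    simp only [Finset.mul_sum, Finset.sum_mul]
    exact Finset.sum_congr rfl fun i _ => by ring
  have h6 : (∑ i, (2 * π * Complex.I * k i) * v i : ℂ) =
      ((2 * π * ∑ i, k i * v i : ℝ) : ℂ) * Complex.I := by
    push_cast
    simp only [Finset.mul_sum, Finset.sum_mul]
    exact Finset.sum_congr rfl fun i _ => by ring
  rw [norm_mul, norm_mul, h5, Complex.norm_exp_ofReal_mul_I, one_mul, h6, norm_mul,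
    Complex.norm_real, Complex.norm_I, mul_one, Real.norm_eq_abs]
  gcongr
  refine abs_le_of_sq_le_sq ?_ (by positivity)
  have hcs := Finset.sum_mul_sq_le_sq_mul_sq Finset.univ (fun i => (k i : ℝ)) (fun i => v i)
  rw [mul_pow, mul_pow lam, ← hS k hk, EuclideanSpace.real_norm_sq_eq, mul_assoc]
  gcongr

theorem gradient_sup_bound (n : ℕ) (hn : 2 ≤ n) :
    ∃ C : ℝ, 0 < C ∧
      ∀ (lam : ℝ), 0 < lam →
        ∀ (φ : EuclideanSpace ℝ (Fin n) → ℝ), ContDiff ℝ (⊤ : ℕ∞) φ → ZPeriodic φ →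
          (∀ x, lap φ x = -lam ^ 2 * φ x) → (∫ x in Qcube n, (φ x) ^ 2) = 1 →
          ∀ x, ‖gradient φ x‖ ≤ C * lam ^ (((n : ℝ) + 1) / 2) := by
  obtain ⟨m, rfl⟩ : ∃ m, n = m + 1 := ⟨n - 1, by omega⟩
  refine ⟨√(2 * 3 ^ m), by positivity, fun lam hlam φ hφ hp hlap hnorm x => ?_⟩
  obtain ⟨F, hF⟩ := exists_torus_lift hφ.continuous hp
  set c := UnitAddTorus.mFourierCoeff F with hcdef
  -- The frequencies on the sphere `2π|k| = λ` form a finite set.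
  have hfin : {k : Fin (m + 1) → ℤ | (2 * π) ^ 2 * ∑ i, (k i : ℝ) ^ 2 = lam ^ 2}.Finite := by
    refine (Set.Finite.pi' fun _ : Fin (m + 1) => Set.finite_Icc (-⌊lam⌋) ⌊lam⌋).subset ?_
    intro k hk i
    simp only [Set.mem_ofPred_eq] at hk
    refine abs_le.1 (Int.le_floor.2 ?_)
    push_cast
    refine abs_le_of_sq_le_sq ?_ hlam.le
    have h1 := Finset.single_le_sum (f := fun i => (k i : ℝ) ^ 2) (fun _ _ => sq_nonneg _)
      (Finset.mem_univ i)
    have h2 : (1 : ℝ) ≤ (2 * π) ^ 2 := by nlinarith [Real.pi_gt_three]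
    nlinarith [sq_nonneg (k i : ℝ)]
  let S := hfin.toFinset
  have hS : ∀ k ∈ S, (2 * π) ^ 2 * ∑ i, (k i : ℝ) ^ 2 = lam ^ 2 := fun k hk => by
    simpa [S] using hk
  have hc0 : ∀ k ∉ S, c k = 0 := fun k hk =>
    mFourierCoeff_eq_zero hφ hp hlap F hF k (by simpa [S] using hk)
  have hsum : ∀ x : Fin (m + 1) → ℝ, (φ (WithLp.toLp 2 x) : ℂ) =
      ∑ k ∈ S, c k * Complex.exp (∑ i, (2 * π * Complex.I * k i) * x i) := by
    intro x
    have h := UnitAddTorus.hasSum_mFourier_series_apply_of_summable (f := F)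
      (summable_of_ne_finset_zero (s := S) hc0) (fun i => (x i : UnitAddCircle))
    rw [hF] at h
    simp only [mFourier_coe, smul_eq_mul] at h
    exact h.unique (hasSum_sum_of_ne_finset_zero fun k hk => by
      rw [← hcdef, hc0 k hk, zero_mul])
  have hpars : ∑ k ∈ S, ‖c k‖ ^ 2 = 1 :=
    (hasSum_sum_of_ne_finset_zero fun k hk => by simp [hc0 k hk]).unique (parseval F hF hnorm)
  have hcount : (S.card : ℝ) ≤ 2 * 3 ^ m * lam ^ m := by
    have h := lattice_count m (lam / (2 * π)) S (by positivity) fun k hk => by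
      rw [div_pow, ← hS k hk]; field_simp
    refine h.trans ?_
    rw [mul_pow, mul_assoc]
    gcongr
    exact div_le_self hlam.le (by linarith [Real.pi_gt_three])
  have hcs : ∑ k ∈ S, ‖c k‖ ≤ √(2 * 3 ^ m * lam ^ m) := by
    refine Real.le_sqrt_of_sq_le ?_
    refine (sq_sum_le_card_mul_sum_sq (s := S) (f := fun k => ‖c k‖)).trans ?_
    rw [hpars, mul_one]
    exact hcount
  have hpow : lam * √(lam ^ m) = lam ^ ((((m + 1 : ℕ) : ℝ) + 1) / 2) := by
    rw [Real.sqrt_eq_rpow, ← Real.rpow_natCast, ← Real.rpow_mul hlam.le]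
    nth_rewrite 1 [← Real.rpow_one lam]
    rw [← Real.rpow_add hlam]
    congr 1
    push_cast
    ring
  calc ‖gradient φ x‖ = ‖fderiv ℝ φ x‖ := LinearIsometryEquiv.norm_map _ _
    _ ≤ lam * ∑ k ∈ S, ‖c k‖ :=
        norm_fderiv_le_of_trig_poly hlam (hφ.differentiable (by simp)) S c hS hsum x
    _ ≤ lam * √(2 * 3 ^ m * lam ^ m) := by gcongr
    _ = √(2 * 3 ^ m) * lam ^ ((((m + 1 : ℕ) : ℝ) + 1) / 2) := by
        rw [Real.sqrt_mul (by positivity), ← hpow]; ring
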